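/- Let M be a topological n-manifold without boundary admitting a left cancellative continuous binary operation · : M × M → M possessing a right unit e ∈ M (i.e., x·e = x for all x ∈ M). Then M is isotopically orientable. -/

import Mathlib

/-!
The chart at `x` is left division by `x`, `w ↦ x \ w`, defined near `x`. If `u` lies in the domains
of the charts at `x` and `y`, then dividing by the points `γ t` of a path from `y` through `u` to `x`
gives maps `z ↦ γ t \ (x · z)`: at the start this is the transition map, at the end the identity.
The chart domains `U x` are path connected and so small that `v \ w` exists and lies in `E` for all
`v, w ∈ U x`; this keeps every stage of the isotopy defined and with values in `E`.

What makes this work is that `v \ w` exists and is jointly continuous for `(v, w)` near the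
diagonal. The map `(v, z) ↦ (v, v · z)` of `M × M` is continuous, injective by left cancellation,
and sends `(x, e)` to `(x, x)`, so it suffices that it is open: this is invariance of domain in
dimension `2n` (`isOpenMap_of_continuous_injective`).

Invariance of domain is deduced from the fact that a continuous map of the closed ball that is close
to the identity has a zero (`exists_zero_of_near_id`), which in turn follows from the nonexistence
of a `C¹` retraction of the ball onto the sphere (`no_retraction`). The latter is proved by the
change of variables formula: the integral of the Jacobian determinant along the linear homotopy from
the identity to a retraction is polynomial in the time, equal to the volume of the ball for small
times, and zero at the end.
-/

/-- A function `f` restricted to `U` is an open topological embedding into `E`: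
it is continuous on `U`, injective on `U`, maps `U` into `E`, and maps open
subsets of `U` to open sets. -/
def OpenEmbeddingOn {X : Type*} [TopologicalSpace X] (f : X → X) (U E : Set X) : Prop :=
  ContinuousOn f U ∧ Set.InjOn f U ∧ Set.MapsTo f U E ∧
    ∀ V ⊆ U, IsOpen V → IsOpen (f '' V)

/-- Two maps `f g : U → E` are open-isotopic if there is a homotopy `(h_t)_{t ∈ [0,1]}`
with `h_0 = f`, `h_1 = g`, each `h_t` being an open topological embedding of `U` into `E`. -/
def OpenIsotopic {X : Type*} [TopologicalSpace X] (f g : X → X) (U E : Set X) : Prop :=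
  ∃ H : ℝ × X → X,
    ContinuousOn H (Set.Icc (0:ℝ) 1 ×ˢ U) ∧
    (∀ u ∈ U, H (0, u) = f u) ∧
    (∀ u ∈ U, H (1, u) = g u) ∧
    ∀ t ∈ Set.Icc (0:ℝ) 1, OpenEmbeddingOn (fun u => H (t, u)) U E

/-- `X` is an `E`-orientable `E`-manifold: there is an atlas of open charts
`φ_x : U_x → E` such that every transition map is, locally, open-isotopic to the
identity inclusion. -/
def EOrientableManifold {X : Type*} [TopologicalSpace X] (E : Set X) : Prop :=
  ∃ (U : X → Set X) (φ : X → X → X),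
    (∀ x : X, IsOpen (U x) ∧ x ∈ U x ∧ OpenEmbeddingOn (φ x) (U x) E) ∧
    ∀ x y : X, ∃ T : X → X,
      (∀ u ∈ U x ∩ U y, T (φ x u) = φ y u) ∧
      ∀ z ∈ φ x '' (U x ∩ U y), ∃ W : Set X, IsOpen W ∧ z ∈ W ∧
        W ⊆ φ x '' (U x ∩ U y) ∧ OpenIsotopic T id W E

/-- A space is isotopically orientable if there is a point `e` such that for every
open neighborhood `E` of `e` the space is an `E`-orientable `E`-manifold. -/
def IsotopicallyOrientable (X : Type*) [TopologicalSpace X] : Prop :=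
  ∃ e : X, ∀ E : Set X, IsOpen E → e ∈ E → EOrientableManifold E

/-- A topological `n`-manifold without boundary: every point has an open
neighborhood homeomorphic to an open subset of `ℝⁿ`. (Paracompactness and
Hausdorffness are imposed as instance hypotheses.) -/
def IsTopManifold (n : ℕ) (M : Type*) [TopologicalSpace M] : Prop :=
  ∀ x : M, ∃ (U : Set M) (V : Set (EuclideanSpace ℝ (Fin n))),
    IsOpen U ∧ x ∈ U ∧ IsOpen V ∧ Nonempty (U ≃ₜ V)

/-- The closed half-space `ℝⁿ₊ = {x ∈ ℝⁿ : xₙ ≥ 0}` (the last coordinate is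
nonnegative). -/
def halfSpace (n : ℕ) : Set (EuclideanSpace ℝ (Fin n)) :=
  {x | ∀ i : Fin n, (i : ℕ) = n - 1 → 0 ≤ x i}

/-- A topological `n`-manifold with boundary: every point has an open neighborhood
admitting an open topological embedding into the half-space `ℝⁿ₊`. -/
def IsTopManifoldWithBoundary (n : ℕ) (M : Type*) [TopologicalSpace M] : Prop :=
  ∀ x : M, ∃ (U : Set M) (f : M → EuclideanSpace ℝ (Fin n)),
    IsOpen U ∧ x ∈ U ∧ Set.MapsTo f U (halfSpace n) ∧ Set.InjOn f U ∧ ContinuousOn f U ∧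
    ∀ V ⊆ U, IsOpen V →
      ∃ W : Set (EuclideanSpace ℝ (Fin n)), IsOpen W ∧ f '' V = W ∩ halfSpace n

/-- The boundary `∂M` of a manifold with boundary: points having no open
neighborhood homeomorphic to `ℝⁿ`. -/
def manifoldBoundary (n : ℕ) (M : Type*) [TopologicalSpace M] : Set M :=
  {x | ¬ ∃ U : Set M, IsOpen U ∧ x ∈ U ∧ Nonempty (U ≃ₜ EuclideanSpace ℝ (Fin n))}

open Set Metric MeasureTheory
open scoped Topology NNReal

/-! ### No `C¹` retraction of the ball onto the sphere -/

theorem exists_polynomial_eval_eq_det {E : Type*} [NormedAddCommGroup E] [NormedSpace ℝ E]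
    [FiniteDimensional ℝ E] (A : E →L[ℝ] E) :
    ∃ p : Polynomial ℝ, p.natDegree ≤ Module.finrank ℝ E ∧
      ∀ t : ℝ, p.eval t = (1 + t • A).det := by
  classical
  let b := Module.finBasis ℝ E
  let M := LinearMap.toMatrix b b (A : E →ₗ[ℝ] E)
  refine ⟨_, (Polynomial.natDegree_det_X_add_C_le M 1).trans (by simp), fun t => ?_⟩
  have h1 : (1 + t • A).det = (t • M + 1).det := by
    rw [ContinuousLinearMap.det, ← LinearMap.det_toMatrix b]
    congr 1
    have : ((1 + t • A : E →L[ℝ] E) : E →ₗ[ℝ] E) = t • (A : E →ₗ[ℝ] E) + LinearMap.id := by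
      ext x; simp [add_comm]
    rw [this, map_add, map_smul, LinearMap.toMatrix_id]
  rw [h1, ← Polynomial.coe_evalRingHom, RingHom.map_det]
  congr 1
  ext i j
  by_cases hij : i = j <;> simp [hij, M] <;> ring

theorem exists_det_one_add_pos (E : Type*) [NormedAddCommGroup E] [NormedSpace ℝ E]
    [FiniteDimensional ℝ E] :
    ∃ ε > 0, ∀ A : E →L[ℝ] E, ‖A‖ < ε → 0 < (1 + A).det := by
  have hc : Continuous fun A : E →L[ℝ] E => (1 + A).det := 
    ContinuousLinearMap.continuous_det.comp (by fun_prop)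
  have h0 : (0:ℝ) < (1 + (0 : E →L[ℝ] E)).det := by simp [ContinuousLinearMap.det]
  obtain ⟨ε, hε, h⟩ := Metric.eventually_nhds_iff.1 (hc.continuousAt.eventually (lt_mem_nhds h0))
  exact ⟨ε, hε, fun A hA => h (by simpa using hA)⟩

/-- A perturbation `f` of the identity with Lipschitz displacement of constant `c < 1`, fixing the
unit sphere and mapping the open ball to itself, permutes the open ball: the image of the ball is
open since `f` is a perturbation of the identity, and relatively closed in the ball by compactness
of the closed ball. -/
theorem injOn_and_image_ball_of_lipschitz_sub_id {E : Type*} [NormedAddCommGroup E]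
    [NormedSpace ℝ E]
    [FiniteDimensional ℝ E] {f : E → E} {c : ℝ≥0} (hc : c < 1)
    (hf : LipschitzOnWith c (fun x => f x - x) (closedBall 0 1))
    (hmap : MapsTo f (ball 0 1) (ball 0 1)) (hs : ∀ x, ‖x‖ = 1 → f x = x) :
    InjOn f (ball 0 1) ∧ f '' ball 0 1 = ball 0 1 := by
  have happ : ApproximatesLinearOn f (ContinuousLinearEquiv.refl ℝ E : E →L[ℝ] E)
      (closedBall 0 1) c := by
    rw [ApproximatesLinearOn.approximatesLinearOn_iff_lipschitzOnWith]
    exact hf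
  have happ' := happ.mono_set (ball_subset_closedBall)
  have hN : Subsingleton E ∨ c < ‖((ContinuousLinearEquiv.refl ℝ E).symm : E →L[ℝ] E)‖₊⁻¹ := by
    rcases subsingleton_or_nontrivial E with h | h
    · exact Or.inl h
    · right
      have : ‖((ContinuousLinearEquiv.refl ℝ E).symm : E →L[ℝ] E)‖₊ = 1 := by
        ext; exact ContinuousLinearMap.norm_id
      rw [this]; simpa using hc
  have hopen : IsOpen (f '' ball 0 1) :=
    (happ'.toOpenPartialHomeomorph f _ hN isOpen_ball).open_target
  refine ⟨happ'.injOn hN, hmap.image_subset.antisymm ?_⟩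
  refine (convex_ball (0:E) 1).isPreconnected.subset_of_closure_inter_subset hopen ?_ ?_
  · have h0 : (0:E) ∈ ball (0:E) 1 := by simp
    exact ⟨f 0, hmap h0, mem_image_of_mem _ h0⟩
  · rintro y ⟨hy, hyb⟩
    have hcl : IsClosed (f '' closedBall 0 1) :=
      ((isCompact_closedBall (0:E) 1).image_of_continuousOn happ.continuousOn).isClosed
    obtain ⟨x, hx, rfl⟩ := closure_minimal (image_mono ball_subset_closedBall) hcl hy
    rcases (mem_closedBall_zero_iff.1 hx).lt_or_eq with h | h
    · exact mem_image_of_mem _ (by simpa using h)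
    · rw [hs x h] at hyb
      simp [h] at hyb

/-- The no-retraction theorem. Along the homotopy `x ↦ x + t • (r x - x)`, the integral over the
unit ball of the Jacobian determinant is a polynomial in `t`. It equals the volume of the ball for
small `t > 0`, when the homotopy permutes the ball, and vanishes at `t = 1`, since the derivative
of a map into the sphere is nowhere surjective. -/
theorem no_retraction {E : Type*} [NormedAddCommGroup E] [InnerProductSpace ℝ E]
    [FiniteDimensional ℝ E] {r : E → E} (hr : ContDiff ℝ 1 r)
    (hr1 : ∀ x, ‖x‖ ≤ 1 → ‖r x‖ = 1) (hrs : ∀ x, ‖x‖ = 1 → r x = x) : False := by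
  borelize E
  set u : E → E := fun x => r x - x with hu
  have hud : ContDiff ℝ 1 u := hr.sub contDiff_id
  have hDc : Continuous (fderiv ℝ u) := hud.continuous_fderiv one_ne_zero
  obtain ⟨K, hK⟩ := (hud.contDiffOn (s := closedBall (0:E) 1)).exists_lipschitzOnWith one_ne_zero
    (convex_closedBall 0 1) (isCompact_closedBall 0 1)
  obtain ⟨C, hC⟩ := (isCompact_closedBall (0:E) 1).exists_bound_of_continuousOn hDc.continuousOn
  obtain ⟨ε, hε, hdet⟩ := exists_det_one_add_pos E
  have hC0 : 0 ≤ C := (norm_nonneg _).trans (hC 0 (by simp))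
  obtain ⟨t0, ht0, ht01, ht0K, ht0C⟩ : ∃ t0 : ℝ, 0 < t0 ∧ t0 < 1 ∧ t0 * K < 1 ∧ t0 * C < ε := by
    have e1 : ∀ᶠ t in 𝓝[>] (0:ℝ), t < 1 := nhdsWithin_le_nhds (gt_mem_nhds one_pos)
    have e2 : ∀ᶠ t in 𝓝[>] (0:ℝ), t * (K : ℝ) < 1 := nhdsWithin_le_nhds <|
      (by fun_prop : Continuous fun t : ℝ => t * _).continuousAt.eventually (gt_mem_nhds (by simp))
    have e3 : ∀ᶠ t in 𝓝[>] (0:ℝ), t * C < ε := nhdsWithin_le_nhds <|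
      (by fun_prop : Continuous fun t : ℝ => t * _).continuousAt.eventually (gt_mem_nhds (by simpa))
    obtain ⟨t, h1, h2, h3, h4⟩ := (eventually_mem_nhdsWithin.and (e1.and (e2.and e3))).exists
    exact ⟨t, h1, h2, h3, h4⟩
  let V : ℝ := volume.real (ball (0:E) 1)
  have hV : 0 < V := ENNReal.toReal_pos (measure_ball_pos _ _ one_pos).ne' measure_ball_lt_top.ne
  have hcont : ∀ t : ℝ, Continuous fun x => (1 + t • fderiv ℝ u x).det := fun t =>
    ContinuousLinearMap.continuous_det.comp (by fun_prop)
  have hint : ∀ t : ℝ, IntegrableOn (fun x => (1 + t • fderiv ℝ u x).det) (ball (0:E) 1) := fun t =>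
    ((hcont t).continuousOn.integrableOn_compact (isCompact_closedBall (0:E) 1)).mono_set
      ball_subset_closedBall
  have key : ∀ t : ℝ, 0 < t → t ≤ t0 → ∫ x in ball (0:E) 1, (1 + t • fderiv ℝ u x).det = V := by
    intro t ht htt
    have hderiv : ∀ x ∈ ball (0:E) 1,
        HasFDerivWithinAt (fun x => x + t • u x) (1 + t • fderiv ℝ u x) (ball 0 1) x := by
      intro x _
      exact ((hasFDerivAt_id x).add
        ((hud.differentiable one_ne_zero x).hasFDerivAt.const_smul t)).hasFDerivWithinAt
    have hpos : ∀ x ∈ ball (0:E) 1, 0 < (1 + t • fderiv ℝ u x).det := by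
      intro x hx
      apply hdet
      rw [norm_smul, Real.norm_of_nonneg ht.le]
      calc t * ‖fderiv ℝ u x‖ ≤ t0 * C :=
            mul_le_mul htt (hC x (ball_subset_closedBall hx)) (norm_nonneg _) ht0.le
        _ < ε := ht0C
    obtain ⟨hinj, himg⟩ : InjOn (fun x => x + t • u x) (ball (0:E) 1) ∧
        (fun x => x + t • u x) '' ball (0:E) 1 = ball 0 1 := by
      refine injOn_and_image_ball_of_lipschitz_sub_id (c := t.toNNReal * K) ?_ ?_ ?_ ?_
      · rw [← NNReal.coe_lt_coe]
        push_cast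
        rw [Real.coe_toNNReal t ht.le]
        exact (mul_le_mul_of_nonneg_right htt K.2).trans_lt ht0K
      · rw [lipschitzOnWith_iff_norm_sub_le] at hK ⊢
        intro x hx y hy
        have := hK hx hy
        simp only [add_sub_cancel_left, ← smul_sub, norm_smul, Real.norm_of_nonneg ht.le]
        push_cast
        rw [Real.coe_toNNReal t ht.le, mul_assoc]
        exact mul_le_mul_of_nonneg_left this ht.le
      · intro x hx
        have hx' : ‖x‖ < 1 := by simpa using hx
        have e : x + t • u x = (1 - t) • x + t • r x := by simp only [hu]; module
        rw [mem_ball_zero_iff]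
        beta_reduce
        rw [e]
        calc ‖(1 - t) • x + t • r x‖ ≤ ‖(1 - t) • x‖ + ‖t • r x‖ := norm_add_le _ _
          _ = (1 - t) * ‖x‖ + t := by
            rw [norm_smul, norm_smul, hr1 x hx'.le, Real.norm_of_nonneg ht.le,
              Real.norm_of_nonneg (by linarith), mul_one]
          _ < 1 := by nlinarith
      · intro x hx
        simp [hu, hrs x hx]
    have hmain := lintegral_abs_det_fderiv_eq_addHaar_image volume measurableSet_ball hderiv hinj
    rw [himg] at hmain
    rw [integral_eq_lintegral_of_nonneg_ae]
    · change _ = (volume (ball (0:E) 1)).toReal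
      rw [← hmain]
      congr 1
      refine setLIntegral_congr_fun measurableSet_ball fun x hx => ?_
      simp only [abs_of_pos (hpos x hx)]
    · exact (ae_restrict_iff' measurableSet_ball).2 (.of_forall fun x hx => (hpos x hx).le)
    · exact (hcont t).aestronglyMeasurable
  have hone : ∫ x in ball (0:E) 1, (1 + (1:ℝ) • fderiv ℝ u x).det = 0 := by
    refine setIntegral_eq_zero_of_forall_eq_zero fun x hx => ?_
    have hrx : HasFDerivAt r (1 + (1:ℝ) • fderiv ℝ u x) x := by
      have := (hasFDerivAt_id x).add (hud.differentiable one_ne_zero x).hasFDerivAt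
      rw [one_smul]
      refine this.congr_of_eventuallyEq (.of_forall fun y => ?_)
      simp [hu]
    set A := 1 + (1:ℝ) • fderiv ℝ u x
    have hx' : ‖x‖ < 1 := by simpa using hx
    have horth : ∀ v, inner ℝ (r x) (A v) = 0 := by
      intro v
      have h1 := hrx.norm_sq
      have h2 : HasFDerivAt (fun y => ‖r y‖ ^ 2) (0 : E →L[ℝ] ℝ) x := by
        refine (hasFDerivAt_const (1:ℝ) x).congr_of_eventuallyEq ?_
        filter_upwards [isOpen_ball.mem_nhds hx] with y hy
        have : ‖y‖ < 1 := by simpa using hy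
        simp [hr1 y this.le]
      have := congrArg (fun L : E →L[ℝ] ℝ => L v) (h1.unique h2)
      simpa using this
    by_contra hne
    obtain ⟨v, hv⟩ := (LinearMap.equivOfDetNeZero (A : E →ₗ[ℝ] E) hne).surjective (r x)
    have hv' : A v = r x := hv
    have := horth v
    rw [hv', real_inner_self_eq_norm_sq, hr1 x hx'.le] at this
    norm_num at this
  -- Lagrange interpolation at `N + 1` nodes in `(0, t0]` expresses the integral at `t = 1` through
  -- integrals for small `t`, so no coefficient of the determinant polynomial has to be integrated.
  set N := Module.finrank ℝ E
  let s := Finset.range (N + 1)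
  let v : ℕ → ℝ := fun i => t0 / (i + 1)
  have hvs : Set.InjOn v s := by
    intro i _ j _ hij
    have h1 : ((i:ℝ) + 1) ≠ 0 := by positivity
    have h2 : ((j:ℝ) + 1) ≠ 0 := by positivity
    simp only [v] at hij
    rw [div_eq_div_iff h1 h2] at hij
    have := mul_left_cancel₀ ht0.ne' hij
    have : (j:ℝ) = i := by linarith
    exact_mod_cast this.symm
  let L : ℕ → ℝ := fun i => (Lagrange.basis s v i).eval 1
  have hL : ∑ i ∈ s, L i = 1 := by
    have := congrArg (Polynomial.eval 1) (Lagrange.sum_basis hvs ⟨0, by simp [s]⟩)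
    simpa [Polynomial.eval_finsetSum, L] using this
  have hinterp : ∀ x, (1 + (1:ℝ) • fderiv ℝ u x).det =
      ∑ i ∈ s, (1 + v i • fderiv ℝ u x).det * L i := by
    intro x
    obtain ⟨p, hp, hpe⟩ := exists_polynomial_eval_eq_det (fderiv ℝ u x)
    have hdeg : p.degree < s.card := by
      refine (Polynomial.degree_le_natDegree).trans_lt ?_
      simp only [s, Finset.card_range]
      exact_mod_cast Nat.lt_succ_of_le hp
    have := congrArg (Polynomial.eval 1) (Lagrange.eq_interpolate hvs hdeg)
    rw [hpe, Lagrange.interpolate_apply, Polynomial.eval_finsetSum] at this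
    simpa [hpe, L] using this
  have : ∫ x in ball (0:E) 1, (1 + (1:ℝ) • fderiv ℝ u x).det = V := by
    simp_rw [hinterp]
    rw [integral_finsetSum _ fun i _ => (hint _).mul_const _]
    have : ∀ i ∈ s, ∫ x in ball (0:E) 1, (1 + v i • fderiv ℝ u x).det * L i = V * L i := by
      intro i _
      rw [integral_mul_const, key (v i) (by positivity)]
      exact div_le_self ht0.le (by simp)
    rw [Finset.sum_congr rfl this, ← Finset.mul_sum, hL, mul_one]
  linarith
/-! ### Invariance of domain -/

theorem exists_pos_le_norm_of_isCompact {E : Type*} [NormedAddCommGroup E] {K : Set E}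
    (hK : IsCompact K) {g : E → E} (hg : ContinuousOn g K) (h0 : ∀ x ∈ K, g x ≠ 0) :
    ∃ δ > 0, ∀ x ∈ K, δ ≤ ‖g x‖ := by
  rcases K.eq_empty_or_nonempty with rfl | hne
  · exact ⟨1, one_pos, by simp⟩
  · obtain ⟨a, ha, hmin⟩ := hK.exists_isMinOn hne hg.norm
    exact ⟨‖g a‖, norm_pos_iff.2 (h0 a ha), fun x hx => hmin hx⟩

/-- Stability of the zero of the identity: a continuous map on the closed unit ball that moves
points by at most `1 / 2` has a zero. Otherwise a `C¹` approximation of it, interpolated with the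
identity near the sphere and normalized, would be a retraction of the ball onto the sphere. -/
theorem exists_zero_of_near_id {E : Type*} [NormedAddCommGroup E] [InnerProductSpace ℝ E]
    [FiniteDimensional ℝ E] {g : E → E} (hg : ContinuousOn g (closedBall 0 1))
    (h : ∀ x, ‖x‖ ≤ 1 → ‖g x - x‖ ≤ 1 / 2) : ∃ x, ‖x‖ ≤ 1 ∧ g x = 0 := by
  by_contra! hne
  obtain ⟨δ, hδ, hδg⟩ := exists_pos_le_norm_of_isCompact (isCompact_closedBall (0:E) 1) hg
    fun x hx => hne x (by simpa using hx)
  obtain ⟨G, hG⟩ := ContinuousMap.exists_restrict_eq (isClosed_closedBall (x := (0:E)) (ε := 1))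
    ⟨(closedBall (0:E) 1).domRestrict g, hg.domRestrict⟩
  have hGg : ∀ x, ‖x‖ ≤ 1 → G x = g x := fun x hx =>
    congrArg (fun k => k ⟨x, by simpa using hx⟩) hG
  obtain ⟨p, hp, hpG, -⟩ := G.continuous.exists_contDiff_approx (1 : ℕ∞)
    (ε := fun _ => min δ (1 / 10)) continuous_const (fun _ => by positivity)
  have hpg : ∀ x, ‖x‖ ≤ 1 → ‖p x - g x‖ < min δ (1 / 10) := fun x hx => by
    rw [← hGg x hx, ← dist_eq_norm]; exact hpG x
  let b : ContDiffBump (0 : E) := ⟨8 / 10, 9 / 10, by norm_num, by norm_num⟩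
  let q : E → E := fun x => b x • p x + (1 - b x) • x
  have hq : ContDiff ℝ 1 q :=
    (b.contDiff.smul hp).add ((contDiff_const.sub b.contDiff).smul contDiff_id)
  have hqout : ∀ x, 9 / 10 ≤ ‖x‖ → q x = x := fun x hx => by
    have : b x = 0 := b.zero_of_le_dist (by simpa using hx)
    simp [q, this]
  have hq0 : ∀ x, q x ≠ 0 := by
    intro x hx
    rcases le_or_gt ‖x‖ (8 / 10) with h1 | h1
    · have hb : b x = 1 := b.one_of_mem_closedBall (by simpa using h1)
      have hx1 : ‖x‖ ≤ 1 := by linarith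
      have hp0 : p x = 0 := by simpa [q, hb] using hx
      have h2 := hpg x hx1
      rw [hp0, zero_sub, norm_neg] at h2
      exact (hδg x (by simpa using hx1)).not_gt (h2.trans_le (min_le_left _ _))
    · rcases le_or_gt (9 / 10) ‖x‖ with h2 | h2
      · rw [hqout x h2] at hx
        simp [hx] at h2
        norm_num at h2
      · have hx1 : ‖x‖ ≤ 1 := by linarith
        have h3 : q x = x + b x • ((p x - g x) + (g x - x)) := by simp only [q]; module
        have h4 : x = -(b x • ((p x - g x) + (g x - x))) := by
          rw [hx] at h3
          exact eq_neg_of_add_eq_zero_left h3.symm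
        have h5 : ‖x‖ ≤ 6 / 10 := by
          rw [h4, norm_neg, norm_smul, Real.norm_of_nonneg b.nonneg]
          have h6 : ‖(p x - g x) + (g x - x)‖ ≤ 6 / 10 := by
            refine (norm_add_le _ _).trans ?_
            have := (hpg x hx1).trans_le (min_le_right _ _)
            have := h x hx1
            linarith
          calc b x * _ ≤ 1 * (6 / 10) := mul_le_mul b.le_one h6 (norm_nonneg _) zero_le_one
            _ = _ := one_mul _
        linarith
  refine no_retraction (r := fun x => ‖q x‖⁻¹ • q x) ?_ ?_ ?_
  · exact ((hq.norm ℝ hq0).inv fun x => norm_ne_zero_iff.2 (hq0 x)).smul hq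
  · intro x _
    rw [norm_smul, norm_inv, norm_norm, inv_mul_cancel₀ (norm_ne_zero_iff.2 (hq0 x))]
  · intro x hx
    simp [hqout x (by rw [hx]; norm_num), hx]

/-- Local invariance of domain. Let `G` be a continuous extension of the inverse of `f`. If `f 0`
were not interior to the image, there would be a nearby point `c` outside the image. Pushing the
image radially away from `c` and applying a `C¹` perturbation of `G` without zeros on the pushed
image then gives, after composition with `f`, a map close to the identity without zeros, which
`exists_zero_of_near_id` forbids. -/
theorem mem_interior_image_closedBall {E : Type*} [NormedAddCommGroup E] [InnerProductSpace ℝ E]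
    [FiniteDimensional ℝ E] {f : E → E} (hf : ContinuousOn f (closedBall 0 1))
    (hinj : InjOn f (closedBall 0 1)) : f 0 ∈ interior (f '' closedBall 0 1) := by
  borelize E
  set B := closedBall (0:E) 1 with hB
  have hBc : IsCompact B := isCompact_closedBall 0 1
  have h0B : (0:E) ∈ B := by simp [hB]
  by_contra hint
  obtain ⟨G, hG⟩ : ∃ G : C(E, E), ∀ x ∈ B, G (f x) = x := by
    have : CompactSpace B := isCompact_iff_compactSpace.1 hBc
    have hemb : Topology.IsClosedEmbedding (B.domRestrict f) :=
      hf.domRestrict.isClosedEmbedding (injOn_iff_injective.1 hinj)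
    obtain ⟨G, hG⟩ := ContinuousMap.exists_extension hemb ⟨Subtype.val, continuous_subtype_val⟩
    exact ⟨G, fun x hx => congrArg (fun k => k ⟨x, hx⟩) hG⟩
  have hKc : IsCompact (f '' B) := hBc.image_of_continuousOn hf
  obtain ⟨η, hη, hGη⟩ : ∃ η > 0, ∀ y, ‖y - f 0‖ < η → ‖G y‖ < 1 / 10 := by
    have := G.continuous.norm.continuousAt (x := f 0)
    have := this.eventually (gt_mem_nhds (show ‖G (f 0)‖ < 1 / 10 by
      rw [hG 0 h0B]; norm_num))
    obtain ⟨η, hη, h⟩ := Metric.eventually_nhds_iff.1 this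
    exact ⟨η, hη, fun y hy => h (by rwa [dist_eq_norm])⟩
  obtain ⟨ε, hε, rfl⟩ : ∃ ε > 0, η = 3 * ε := ⟨η / 3, by positivity, by ring⟩
  obtain ⟨c, hcK, hc⟩ : ∃ c, c ∉ f '' B ∧ ‖c - f 0‖ < ε := by
    by_contra! hcon
    refine hint (mem_interior_iff_mem_nhds.2 (Metric.mem_nhds_iff.2 ⟨ε, hε, fun y hy => ?_⟩))
    by_contra hy'
    rw [mem_ball, dist_eq_norm] at hy
    exact (hcon y hy').not_gt hy
  have hGc : ∀ y, ‖y - c‖ ≤ ε → ‖G y‖ < 1 / 10 := fun y hy => hGη y <| by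
    have := norm_add_le (y - c) (c - f 0)
    rw [sub_add_sub_cancel] at this
    linarith
  obtain ⟨δ, hδ, hδG⟩ := exists_pos_le_norm_of_isCompact
    (K := f '' B ∩ {y | ε ≤ ‖y - c‖}) (g := G)
    (hKc.inter_right (isClosed_le continuous_const (by fun_prop))) G.continuous.continuousOn <| by
      rintro _ ⟨⟨x, hx, rfl⟩, hy⟩ h0
      rw [hG x hx] at h0
      rw [mem_ofPred_eq, h0, norm_sub_rev] at hy
      linarith
  obtain ⟨p, hp, hpG, -⟩ := G.continuous.exists_contDiff_approx (1 : ℕ∞)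
    (ε := fun _ => min δ (1 / 10) / 2) continuous_const (fun _ => by positivity)
  -- The sphere is null and `p` is `C¹`, so `p` can be shifted by a small `w` to be nonzero on it.
  obtain ⟨w, hw, hwp⟩ : ∃ w ∈ ball (0:E) (min δ (1 / 10) / 2), w ∉ p '' sphere c ε := by
    by_contra! hcon
    have h1 : volume (p '' sphere c ε) = 0 :=
      addHaar_image_eq_zero_of_differentiableOn_of_addHaar_eq_zero volume
        (hp.differentiable (by norm_num)).differentiableOn
        (Measure.addHaar_sphere_of_ne_zero volume c hε.ne')
    exact (measure_ball_pos volume (0:E) (show 0 < min δ (1 / 10) / 2 by positivity)).ne'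
      (measure_mono_null hcon h1)
  let P : E → E := fun y => p y - w
  have hPc : Continuous P := hp.continuous.sub continuous_const
  have hPG : ∀ y, ‖P y - G y‖ < min δ (1 / 10) := fun y => by
    have h1 := hpG y
    rw [dist_eq_norm] at h1
    rw [mem_ball_zero_iff] at hw
    have h2 := norm_sub_le (p y - G y) w
    have h3 : P y - G y = p y - G y - w := by simp only [P]; abel
    rw [h3]
    linarith
  -- `Φ` pushes the points of the `ε`-ball around `c` radially to its boundary sphere.
  let Φ : E → E := fun y => c + max (ε / ‖y - c‖) 1 • (y - c)
  have hΦout : ∀ y, y ≠ c → ε ≤ ‖y - c‖ → Φ y = y := fun y hyc hy => by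
    have : ε / ‖y - c‖ ≤ 1 := div_le_one_of_le₀ hy (norm_nonneg _)
    simp [Φ, max_eq_right this]
  have hΦin : ∀ y, y ≠ c → ‖y - c‖ ≤ ε → ‖Φ y - c‖ = ε := fun y hyc hy => by
    have hpos : 0 < ‖y - c‖ := norm_pos_iff.2 (sub_ne_zero.2 hyc)
    have : 1 ≤ ε / ‖y - c‖ := (one_le_div hpos).2 hy
    simp only [Φ, max_eq_left this, add_sub_cancel_left, norm_smul]
    rw [Real.norm_of_nonneg (by positivity), div_mul_cancel₀ _ hpos.ne']
  have hfc : ∀ x ∈ B, f x ≠ c := fun x hx h => hcK ⟨x, hx, h⟩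
  obtain ⟨x, hx, hx0⟩ := exists_zero_of_near_id (g := fun x => P (Φ (f x))) (by
      refine hPc.comp_continuousOn ?_
      refine continuousOn_const.add (ContinuousOn.smul ?_ (hf.sub continuousOn_const))
      refine ContinuousOn.sup (continuousOn_const.div (hf.sub continuousOn_const).norm ?_)
        continuousOn_const
      exact fun x hx => norm_ne_zero_iff.2 (sub_ne_zero.2 (hfc x hx))) (by
    intro x hx
    have hxB : x ∈ B := by simpa [hB] using hx
    have hc' := hfc x hxB
    rcases le_total ε ‖f x - c‖ with hy | hy
    · rw [hΦout _ hc' hy]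
      have h1 := (hPG (f x)).trans_le (min_le_right _ _)
      rw [hG x hxB] at h1
      linarith
    · have h1 := (hPG (Φ (f x))).trans_le (min_le_right _ _)
      have h2 := hGc (Φ (f x)) (hΦin _ hc' hy).le
      have h3 := hGc (f x) hy
      rw [hG x hxB] at h3
      have h4 : P (Φ (f x)) - x = (P (Φ (f x)) - G (Φ (f x))) + G (Φ (f x)) - x := by abel
      rw [h4]
      have h5 := norm_sub_le ((P (Φ (f x)) - G (Φ (f x))) + G (Φ (f x))) x
      have h6 := norm_add_le (P (Φ (f x)) - G (Φ (f x))) (G (Φ (f x)))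
      linarith)
  have hxB : x ∈ B := by simpa [hB] using hx
  have hc' := hfc x hxB
  rcases le_total ε ‖f x - c‖ with hy | hy
  · rw [hΦout _ hc' hy] at hx0
    have h1 := (hPG (f x)).trans_le (min_le_left _ _)
    rw [hx0, zero_sub, norm_neg] at h1
    exact (hδG (f x) ⟨mem_image_of_mem _ hxB, hy⟩).not_gt h1
  · refine hwp ⟨Φ (f x), ?_, sub_eq_zero.1 hx0⟩
    rw [mem_sphere, dist_eq_norm]
    exact hΦin _ hc' hy

/-- Invariance of domain in a finite-dimensional real normed space. -/
theorem isOpen_image_of_injOn {V : Type*} [NormedAddCommGroup V] [NormedSpace ℝ V]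
    [FiniteDimensional ℝ V] {f : V → V} {U : Set V} (hU : IsOpen U) (hf : ContinuousOn f U)
    (hinj : InjOn f U) : IsOpen (f '' U) := by
  let e := toEuclidean (E := V)
  rw [isOpen_iff_mem_nhds]
  rintro _ ⟨a, ha, rfl⟩
  have hU' : e.symm ⁻¹' U ∈ 𝓝 (e a) :=
    e.symm.continuous.continuousAt.preimage_mem_nhds (by simpa using hU.mem_nhds ha)
  obtain ⟨r, hr, hrU⟩ := Metric.nhds_basis_closedBall.mem_iff.1 hU'
  let s : EuclideanSpace ℝ (Fin (Module.finrank ℝ V)) → V := fun x => e.symm (e a + r • x)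
  have hs : Continuous s := by fun_prop
  have hsU : MapsTo s (closedBall 0 1) U := fun x hx => hrU <| by
    rw [mem_closedBall_zero_iff] at hx
    rw [mem_closedBall, dist_eq_norm, add_sub_cancel_left, norm_smul, Real.norm_of_nonneg hr.le]
    nlinarith
  have hsinj : Function.Injective s := fun x y hxy => by
    have := add_left_cancel (e.symm.injective hxy)
    exact smul_right_injective _ hr.ne' this
  have hs0 : s 0 = a := by simp [s]
  have key := mem_interior_image_closedBall (f := fun x => e (f (s x)))
    (e.continuous.comp_continuousOn (hf.comp hs.continuousOn hsU))
    (fun x hx y hy hxy => hsinj (hinj (hsU hx) (hsU hy) (e.injective hxy)))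
  rw [mem_interior_iff_mem_nhds] at key
  beta_reduce at key
  rw [hs0] at key
  filter_upwards [e.continuous.continuousAt.preimage_mem_nhds key] with y hy
  obtain ⟨x, hx, hxy⟩ := hy
  exact ⟨s x, hsU hx, e.injective hxy⟩

/-- Invariance of domain for a space locally modelled on a finite-dimensional normed space. -/
theorem isOpenMap_of_continuous_injective {X V : Type*} [TopologicalSpace X]
    [NormedAddCommGroup V] [NormedSpace ℝ V] [FiniteDimensional ℝ V]
    (hX : ∀ x : X, ∃ c : OpenPartialHomeomorph X V, x ∈ c.source) {f : X → X}
    (hf : Continuous f) (hinj : Function.Injective f) : IsOpenMap f := by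
  intro O hO
  rw [isOpen_iff_mem_nhds]
  rintro _ ⟨x, hx, rfl⟩
  obtain ⟨c, hc⟩ := hX x
  obtain ⟨d, hd⟩ := hX (f x)
  let O' := O ∩ c.source ∩ f ⁻¹' d.source
  have hO' : IsOpen O' := (hO.inter c.open_source).inter (d.open_source.preimage hf)
  have hc' : O' ⊆ c.source := fun y hy => hy.1.2
  have hcO : IsOpen (c '' O') := c.isOpen_image_of_subset_source hO' hc'
  have hct : c '' O' ⊆ c.target := by
    rintro _ ⟨y, hy, rfl⟩
    exact c.map_source (hc' hy)
  have hmap : MapsTo (fun v => f (c.symm v)) (c '' O') d.source := by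
    rintro _ ⟨y, hy, rfl⟩
    simpa [c.left_inv (hc' hy)] using hy.2
  have hopen : IsOpen ((fun v => d (f (c.symm v))) '' (c '' O')) := by
    refine isOpen_image_of_injOn hcO ?_ ?_
    · exact d.continuousOn.comp (hf.comp_continuousOn (c.continuousOn_symm.mono hct)) hmap
    · intro v hv w hw hvw
      have := hinj (d.injOn (hmap hv) (hmap hw) hvw)
      exact c.symm.injOn (hct hv) (hct hw) this
  have hopen2 : IsOpen (d.symm '' ((fun v => d (f (c.symm v))) '' (c '' O'))) := by
    refine d.symm.isOpen_image_of_subset_source hopen ?_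
    rintro _ ⟨v, hv, rfl⟩
    exact d.map_source (hmap hv)
  refine Filter.mem_of_superset (hopen2.mem_nhds ?_) ?_
  · refine ⟨d (f x), ⟨c x, ⟨x, ⟨⟨hx, hc⟩, hd⟩, rfl⟩, ?_⟩, d.left_inv hd⟩
    simp [c.left_inv hc]
  · rintro _ ⟨_, ⟨_, ⟨y, hy, rfl⟩, rfl⟩, rfl⟩
    refine ⟨y, hy.1.1, ?_⟩
    simp [c.left_inv (hc' hy), d.left_inv hy.2]

/-! ### Left division and the atlas of left translations -/

theorem IsTopManifold.exists_chart {n : ℕ} {M : Type*} [TopologicalSpace M]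
    (hM : IsTopManifold n M) (x : M) :
    ∃ c : OpenPartialHomeomorph M (EuclideanSpace ℝ (Fin n)), x ∈ c.source := by
  obtain ⟨U, V, hU, hx, hV, ⟨φ⟩⟩ := hM x
  have hU' := hU.isOpenEmbedding_subtypeVal
  have hV' := hV.isOpenEmbedding_subtypeVal
  have : Nonempty U := ⟨⟨x, hx⟩⟩
  have : Nonempty V := ⟨φ ⟨x, hx⟩⟩
  let c := (hU'.toOpenPartialHomeomorph Subtype.val).symm.trans
    ((hV'.comp φ.isOpenEmbedding).toOpenPartialHomeomorph _)
  exact ⟨c, by simp [c, hx]⟩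

theorem exists_isPathConnected_subset {X V : Type*} [TopologicalSpace X]
    [NormedAddCommGroup V] [NormedSpace ℝ V] {x : X} {c : OpenPartialHomeomorph X V}
    (hc : x ∈ c.source) {O : Set X} (hO : IsOpen O) (hx : x ∈ O) :
    ∃ U ⊆ O, IsOpen U ∧ x ∈ U ∧ IsPathConnected U := by
  have hopen : IsOpen (c '' (c.source ∩ O)) :=
    c.isOpen_image_of_subset_source (c.open_source.inter hO) inter_subset_left
  obtain ⟨r, hr, hball⟩ := Metric.isOpen_iff.1 hopen (c x) ⟨x, ⟨hc, hx⟩, rfl⟩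
  have hbt : ball (c x) r ⊆ c.target := fun v hv => by
    obtain ⟨y, hy, rfl⟩ := hball hv
    exact c.map_source hy.1
  refine ⟨c.symm '' ball (c x) r, ?_, c.symm.isOpen_image_of_subset_source isOpen_ball hbt,
    ⟨c x, mem_ball_self hr, c.left_inv hc⟩, ?_⟩
  · rintro _ ⟨v, hv, rfl⟩
    obtain ⟨y, hy, rfl⟩ := hball hv
    rw [c.left_inv hy.1]
    exact hy.2
  · exact ((convex_ball (c x) r).isPathConnected ⟨c x, mem_ball_self hr⟩).image'
      (c.continuousOn_symm.mono hbt)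

/-- By invariance of domain on `M × M`, the map `(v, z) ↦ (v, v · z)` is open, hence an open
embedding. The second component `D` of its inverse is a left division, jointly continuous
where it is defined. -/
theorem exists_continuousOn_leftDivision {n : ℕ} {M : Type*} [TopologicalSpace M]
    (hM : IsTopManifold n M)
    (mul : M → M → M) (hcont : Continuous fun p : M × M => mul p.1 p.2)
    (hleft : ∀ z : M, Function.Injective (mul z)) :
    IsOpenMap (fun p : M × M => (p.1, mul p.1 p.2)) ∧
    ∃ D : M × M → M,
      ContinuousOn D (range fun p : M × M => (p.1, mul p.1 p.2)) ∧
      ∀ v z, D (v, mul v z) = z := by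
  have hF : Continuous fun p : M × M => (p.1, mul p.1 p.2) := continuous_fst.prodMk hcont
  have hinj : Function.Injective fun p : M × M => (p.1, mul p.1 p.2) := by
    rintro ⟨v, y⟩ ⟨w, z⟩ h
    simp only [Prod.mk.injEq] at h
    obtain ⟨rfl, h⟩ := h
    rw [hleft v h]
  have hopen := isOpenMap_of_continuous_injective (fun p : M × M => by
    obtain ⟨c, hc⟩ := hM.exists_chart p.1
    obtain ⟨d, hd⟩ := hM.exists_chart p.2
    exact ⟨c.prod d, hc, hd⟩) hF hinj
  refine ⟨hopen, ?_⟩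
  rcases isEmpty_or_nonempty M with hE | hE
  · exact ⟨Prod.fst, continuous_fst.continuousOn, fun v => hE.elim v⟩
  · have hemb := Topology.IsOpenEmbedding.of_continuous_injective_isOpenMap hF hinj hopen
    let e := hemb.toOpenPartialHomeomorph _
    refine ⟨fun q => (e.symm q).2, ?_, fun v z => ?_⟩
    · have := e.continuousOn_symm
      simp only [e, Topology.IsOpenEmbedding.toOpenPartialHomeomorph_target] at this
      exact continuous_snd.comp_continuousOn this
    · have : e.symm (v, mul v z) = (v, z) :=
      hemb.toOpenPartialHomeomorph_left_inv (x := (v, z))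
      simp only [this]

/-- A topological `n`-manifold without boundary admitting a left cancellative
continuous binary operation with a right unit `e` is isotopically orientable. -/
theorem isotopicallyOrientable_of_leftCancellative_rightUnit
    {n : ℕ} {M : Type*} [TopologicalSpace M] [T2Space M] [ParacompactSpace M]
    (hM : IsTopManifold n M)
    (mul : M → M → M) (hcont : Continuous fun p : M × M => mul p.1 p.2)
    (hleft : ∀ z : M, Function.Injective (mul z))
    (e : M) (he : ∀ x : M, mul x e = x) :
    IsotopicallyOrientable M := by
  classical
  obtain ⟨hopen, D, hDc, hD⟩ := exists_continuousOn_leftDivision hM mul hcont hleft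
  refine ⟨e, fun E hE heE => ?_⟩
  set F : M × M → M × M := fun p => (p.1, mul p.1 p.2) with hF
  have hFE : IsOpen (F '' (univ ×ˢ E)) := hopen _ (isOpen_univ.prod hE)
  have hD' : ∀ v w, (v, w) ∈ F '' (univ ×ˢ E) → mul v (D (v, w)) = w ∧ D (v, w) ∈ E := by
    rintro v w ⟨⟨v', z⟩, ⟨-, hz⟩, h⟩
    simp only [hF, Prod.mk.injEq] at h
    obtain ⟨rfl, rfl⟩ := h
    rw [hD]
    exact ⟨rfl, hz⟩
  have hmulopen : ∀ v, IsOpenMap (mul v) := by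
    intro v O hO
    have h1 : IsOpen (F '' (univ ×ˢ O)) := hopen _ (isOpen_univ.prod hO)
    convert h1.preimage (Continuous.prodMk_right v) using 1
    ext w
    constructor
    · rintro ⟨z, hz, rfl⟩
      exact ⟨(v, z), ⟨mem_univ _, hz⟩, rfl⟩
    · rintro ⟨⟨v', z⟩, ⟨-, hz⟩, h⟩
      simp only [hF, Prod.mk.injEq] at h
      obtain ⟨rfl, rfl⟩ := h
      exact ⟨z, hz, rfl⟩
  -- `U` is small enough that for `v, w ∈ U` the quotient `D (v, w)` is defined and lies in `E`.
  have hU : ∀ x : M, ∃ U : Set M, IsOpen U ∧ x ∈ U ∧ IsPathConnected U ∧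
      U ×ˢ U ⊆ F '' (univ ×ˢ E) := by
    intro x
    have hx : (x, x) ∈ F '' (univ ×ˢ E) := ⟨(x, e), ⟨mem_univ _, heE⟩, by simp [hF, he]⟩
    obtain ⟨O₁, O₂, h1, h2, hx1, hx2, hO⟩ := isOpen_prod_iff.1 hFE x x hx
    obtain ⟨c, hc⟩ := hM.exists_chart x
    obtain ⟨U, hUO, hUo, hxU, hUp⟩ := exists_isPathConnected_subset hc (h1.inter h2) ⟨hx1, hx2⟩
    exact ⟨U, hUo, hxU, hUp, (prod_mono (hUO.trans inter_subset_left)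
      (hUO.trans inter_subset_right)).trans hO⟩
  choose U hUo hxU hUp hUF using hU
  have hDcont : ∀ {Y : Type _} [TopologicalSpace Y] {s : Set Y} {g : Y → M × M},
      ContinuousOn g s → MapsTo g s (F '' (univ ×ˢ E)) → ContinuousOn (fun y => D (g y)) s :=
    fun hg hm => hDc.comp hg fun y hy => image_subset_range _ _ (hm hy)
  have hemb : ∀ (v : M) (A : Set M), (∀ w ∈ A, (v, w) ∈ F '' (univ ×ˢ E)) →
      OpenEmbeddingOn (fun w => D (v, w)) A E := by
    intro v A hA
    refine ⟨hDcont (Continuous.prodMk_right v).continuousOn hA, ?_,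
      fun w hw => (hD' v w (hA w hw)).2, ?_⟩
    · intro w hw w' hw' h
      rw [← (hD' v w (hA w hw)).1, ← (hD' v w' (hA w' hw')).1]
      exact congrArg _ h
    · intro O hOA hO
      convert hO.preimage (hcont.comp (Continuous.prodMk_right v)) using 1
      ext z
      constructor
      · rintro ⟨w, hw, rfl⟩
        simpa [(hD' v w (hA w (hOA hw))).1] using hw
      · intro hz
        exact ⟨mul v z, hz, hD v z⟩
  refine ⟨U, fun x w => D (x, w), fun x => ⟨hUo x, hxU x, hemb x _ fun w hw =>
    hUF x ⟨hxU x, hw⟩⟩, fun x y => ⟨fun z => D (y, mul x z), ?_, ?_⟩⟩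
  · rintro u ⟨hux, -⟩
    beta_reduce
    rw [(hD' x u (hUF x ⟨hxU x, hux⟩)).1]
  · rintro _ ⟨u, ⟨hux, huy⟩, rfl⟩
    set A := U x ∩ U y with hAdef
    have hAx : ∀ w ∈ A, (x, w) ∈ F '' (univ ×ˢ E) := fun w hw => hUF x ⟨hxU x, hw.1⟩
    refine ⟨_, (hemb x A hAx).2.2.2 A subset_rfl ((hUo x).inter (hUo y)), ⟨u, ⟨hux, huy⟩, rfl⟩,
      subset_rfl, ?_⟩
    have hmulA : ∀ z ∈ (fun w => D (x, w)) '' A, mul x z ∈ A := by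
      rintro _ ⟨w, hw, rfl⟩
      beta_reduce
      rwa [(hD' x w (hAx w hw)).1]
    -- A path from `y` to `x` through `u` that stays in `U x ∪ U y`; the isotopy divides by its
    -- points.
    obtain ⟨γ₁, hγ₁⟩ := (hUp y).joinedIn y (hxU y) u huy
    obtain ⟨γ₂, hγ₂⟩ := (hUp x).joinedIn u hux x (hxU x)
    let γ := γ₁.trans γ₂
    have hγ : ∀ t, γ.extend t ∈ U x ∪ U y := by
      intro t
      have h1 : γ.extend t ∈ range γ := by
        rw [← γ.extend_range]; exact mem_range_self t
      rw [Path.trans_range] at h1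
      rcases h1 with ⟨s, hs⟩ | ⟨s, hs⟩
      · exact Or.inr (hs ▸ hγ₁ s)
      · exact Or.inl (hs ▸ hγ₂ s)
    have hγA : ∀ t, ∀ w ∈ A, (γ.extend t, w) ∈ F '' (univ ×ˢ E) := by
      intro t w hw
      rcases hγ t with h | h
      · exact hUF x ⟨h, hw.1⟩
      · exact hUF y ⟨h, hw.2⟩
    refine ⟨fun p => D (γ.extend p.1, mul x p.2), ?_, fun z _ => ?_, fun z _ => ?_, fun t _ => ?_⟩
    · refine hDcont (Continuous.continuousOn ?_) fun p hp => hγA _ _ (hmulA _ hp.2)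
      exact (γ.continuous_extend.comp continuous_fst).prodMk
        (hcont.comp (continuous_const.prodMk continuous_snd))
    · simp
    · simp [hD]
    · obtain ⟨h1, h2, h3, h4⟩ := hemb (γ.extend t) A (hγA t)
      refine ⟨h1.comp (hcont.comp (Continuous.prodMk_right x)).continuousOn hmulA,
        h2.comp (hleft x).injOn hmulA, h3.comp hmulA, fun O hO hOo => ?_⟩
      have := h4 (mul x '' O) (by rintro _ ⟨z, hz, rfl⟩; exact hmulA z (hO hz)) (hmulopen x O hOo)
      rwa [image_image] at this
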